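/- For every χ = (χ₊,χ₋) ∈ ℂ², the element Y := ( e₊(−iχ₊η₊)·e₊(−iqχ₋η₋) ) ⊗ h_χ of A_C, where h_χ(z₊,z₋) = exp(i(χ₊^p z₊ + χ₋^p z₋)), is a plane-wave eigenfunction: q^{−1/2}·(R_κ^{−1}∘R₊)(Y) = χ₊·Y and q^{−1/2}·(R_κ∘R₋)(Y) = χ₋·Y (these operators represent the elements p₊' = q^{−1/2}p₊κ^{−1} and p₋' = q^{−1/2}p₋κ of the quantum algebra U_q(e(1,1)) in the right regular representation). -/

import Mathlib

open scoped TensorProduct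

noncomputable section

/-- `q = exp(2πi/p)`, a primitive `p`-th root of unity. -/
def q (p : ℕ) : ℂ := Complex.exp (2 * Real.pi * Complex.I / p)

/-- `q^{1/2} = exp(iπ/p)`. -/
def qh (p : ℕ) : ℂ := Complex.exp (Real.pi * Complex.I / p)

/-- The balanced q-number `[k] = (q^k - q^{-k})/(q - q^{-1})`. -/
def qnum (p k : ℕ) : ℂ := (q p ^ k - (q p)⁻¹ ^ k) / (q p - (q p)⁻¹)

/-- The balanced q-factorial `[k]! = [1][2]⋯[k]`, with `[0]! = 1`. -/
def qfact (p k : ℕ) : ℂ := ∏ j ∈ Finset.range k, qnum p (j + 1)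

/-- Generators `η₊, η₋, δ` of the coordinate algebra of `E(1,1|p)`. -/
inductive Gen : Type
  | ep : Gen
  | em : Gen
  | d : Gen

open FreeAlgebra in
/-- The defining relations of `A(E(1,1|p))`: the two-sided ideal generated by
`η₋η₊ − q²η₊η₋`, `η₊δ − q²δη₊`, `η₋δ − q²δη₋`, `δ^p − 1`, `η₊^p`, `η₋^p`. -/
inductive ERel (p : ℕ) : FreeAlgebra ℂ Gen → FreeAlgebra ℂ Gen → Prop
  | commEta : ERel p (ι ℂ Gen.em * ι ℂ Gen.ep) ((q p ^ 2) • (ι ℂ Gen.ep * ι ℂ Gen.em))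
  | commEpD : ERel p (ι ℂ Gen.ep * ι ℂ Gen.d) ((q p ^ 2) • (ι ℂ Gen.d * ι ℂ Gen.ep))
  | commEmD : ERel p (ι ℂ Gen.em * ι ℂ Gen.d) ((q p ^ 2) • (ι ℂ Gen.d * ι ℂ Gen.em))
  | deltaPow : ERel p (ι ℂ Gen.d ^ p) 1
  | epPow : ERel p (ι ℂ Gen.ep ^ p) 0
  | emPow : ERel p (ι ℂ Gen.em ^ p) 0

/-- The coordinate algebra `A = A(E(1,1|p))` of the reduced quantum Poincaré group. -/
abbrev A (p : ℕ) : Type := RingQuot (ERel p)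

/-- `η₊ ∈ A`. -/
def ηp (p : ℕ) : A p := RingQuot.mkAlgHom ℂ (ERel p) (FreeAlgebra.ι ℂ Gen.ep)

/-- `η₋ ∈ A`. -/
def ηm (p : ℕ) : A p := RingQuot.mkAlgHom ℂ (ERel p) (FreeAlgebra.ι ℂ Gen.em)

/-- `δ ∈ A`. -/
def dl (p : ℕ) : A p := RingQuot.mkAlgHom ℂ (ERel p) (FreeAlgebra.ι ℂ Gen.d)

set_option synthInstance.maxHeartbeats 1000000
set_option maxHeartbeats 1000000

/-- The algebra `C^∞(ℝ², ℂ)` of smooth complex-valued functions on `ℝ²`. -/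
def Cinf : Subalgebra ℂ ((ℝ × ℝ) → ℂ) where
  carrier := {f | ContDiff ℝ (⊤ : ℕ∞) f}
  mul_mem' := fun {a b} (ha : ContDiff ℝ (⊤ : ℕ∞) a) (hb : ContDiff ℝ (⊤ : ℕ∞) b) =>
    ha.mul hb
  one_mem' := by
    change ContDiff ℝ (⊤ : ℕ∞) (fun _ => (1 : ℂ))
    exact contDiff_const
  add_mem' := fun {a b} (ha : ContDiff ℝ (⊤ : ℕ∞) a) (hb : ContDiff ℝ (⊤ : ℕ∞) b) =>
    ha.add hb
  zero_mem' := by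
    change ContDiff ℝ (⊤ : ℕ∞) (fun _ => (0 : ℂ))
    exact contDiff_const
  algebraMap_mem' c := by
    change ContDiff ℝ (⊤ : ℕ∞) (fun _ => c)
    exact contDiff_const

/-- `A_C = A ⊗ C^∞(ℝ², ℂ)`, the coordinate algebra of the quantum plane `E_q^{(1,1)}`
(without support restriction). -/
abbrev AC (p : ℕ) : Type := A p ⊗[ℂ] ↥Cinf

/-- The partial derivative `∂₊ = ∂/∂z₊` on `C^∞(ℝ², ℂ)`. -/
def dPlus (f : ↥Cinf) : ↥Cinf :=
  ⟨fun z => fderiv ℝ (f : (ℝ × ℝ) → ℂ) z (1, 0), by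
    have hf : ContDiff ℝ (⊤ : ℕ∞) (f : (ℝ × ℝ) → ℂ) := f.2
    exact (hf.fderiv_right (m := (⊤ : ℕ∞)) (by simp)).clm_apply contDiff_const⟩

/-- The partial derivative `∂₋ = ∂/∂z₋` on `C^∞(ℝ², ℂ)`. -/
def dMinus (f : ↥Cinf) : ↥Cinf :=
  ⟨fun z => fderiv ℝ (f : (ℝ × ℝ) → ℂ) z (0, 1), by
    have hf : ContDiff ℝ (⊤ : ℕ∞) (f : (ℝ × ℝ) → ℂ) := f.2
    exact (hf.fderiv_right (m := (⊤ : ℕ∞)) (by simp)).clm_apply contDiff_const⟩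

/-- The smooth function `exp(i(a z₊ + b z₋))` on `ℝ²`. -/
def expAB (a b : ℂ) : ↥Cinf :=
  ⟨fun z => Complex.exp (Complex.I * (a * z.1 + b * z.2)), by
    have h1 : ContDiff ℝ (⊤ : ℕ∞) (fun z : ℝ × ℝ => (z.1 : ℂ)) :=
      Complex.ofRealCLM.contDiff.comp contDiff_fst
    have h2 : ContDiff ℝ (⊤ : ℕ∞) (fun z : ℝ × ℝ => (z.2 : ℂ)) :=
      Complex.ofRealCLM.contDiff.comp contDiff_snd
    have h3 : ContDiff ℝ (⊤ : ℕ∞)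
        (fun z : ℝ × ℝ => Complex.I * (a * (z.1 : ℂ) + b * (z.2 : ℂ))) :=
      contDiff_const.mul ((contDiff_const.mul h1).add (contDiff_const.mul h2))
    exact h3.cexp⟩
/-- The cut-off q-exponential `e₊(x) = Σ_{m=0}^{p−1} (q^{m(m−1)/2}/[m]!) x^m`. -/
def qexp (p : ℕ) (x : A p) : A p :=
  ∑ m ∈ Finset.range p, (q p ^ (m * (m - 1) / 2) / qfact p m) • x ^ m

theorem q_isPrimitiveRoot {p : ℕ} (hp : p ≠ 0) : IsPrimitiveRoot (q p) p :=
  Complex.isPrimitiveRoot_exp p hp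

theorem q_ne_zero (p : ℕ) : q p ≠ 0 := Complex.exp_ne_zero _

theorem qh_ne_zero (p : ℕ) : qh p ≠ 0 := Complex.exp_ne_zero _

theorem qh_mul_qh (p : ℕ) : qh p * qh p = q p := by
  rw [qh, q, ← Complex.exp_add]
  congr 1
  ring

theorem q_pow_sub_inv_pow_ne_zero {p : ℕ} (hp : Odd p) {k : ℕ} (hk : 0 < k) (hkp : k < p) :
    q p ^ k - (q p)⁻¹ ^ k ≠ 0 := by
  intro h
  have hq := q_ne_zero p
  have h2 : q p ^ (2 * k) = 1 := by
    rw [sub_eq_zero, inv_pow] at h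
    rw [two_mul, pow_add]
    nth_rewrite 1 [h]
    exact inv_mul_cancel₀ (pow_ne_zero _ hq)
  have hdvd := (q_isPrimitiveRoot (by omega : p ≠ 0)).dvd_of_pow_eq_one _ h2
  exact absurd (Nat.le_of_dvd hk (hp.coprime_two_right.dvd_of_dvd_mul_left hdvd)) (by omega)

theorem qnum_ne_zero {p : ℕ} (hp : Odd p) {k : ℕ} (hk : 0 < k) (hkp : k < p) :
    qnum p k ≠ 0 := by
  refine div_ne_zero (q_pow_sub_inv_pow_ne_zero hp hk hkp) ?_
  have h1 : 1 < p := by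
    omega
  simpa using q_pow_sub_inv_pow_ne_zero hp one_pos h1

theorem qnum_zero (p : ℕ) : qnum p 0 = 0 := by simp [qnum]

theorem qnum_succ {p : ℕ} (hp : Odd p) (hp3 : 3 ≤ p) (n : ℕ) :
    qnum p (n + 1) = q p ^ n + (q p)⁻¹ * qnum p n := by
  have h1 := q_pow_sub_inv_pow_ne_zero hp one_pos (by omega)
  rw [pow_one, pow_one] at h1
  rw [qnum, qnum, div_eq_iff h1, add_mul, mul_assoc, div_mul_cancel₀ _ h1]
  have hq : q p * (q p)⁻¹ = 1 := mul_inv_cancel₀ (q_ne_zero p)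
  ring_nf

theorem qnum_succ' {p : ℕ} (hp : Odd p) (hp3 : 3 ≤ p) (n : ℕ) :
    qnum p (n + 1) = (q p)⁻¹ ^ n + q p * qnum p n := by
  have h1 := q_pow_sub_inv_pow_ne_zero hp one_pos (by omega)
  rw [pow_one, pow_one] at h1
  rw [qnum, qnum, div_eq_iff h1, add_mul, mul_assoc, div_mul_cancel₀ _ h1]
  ring_nf

theorem qfact_ne_zero {p : ℕ} (hp : Odd p) {k : ℕ} (hkp : k < p) : qfact p k ≠ 0 :=
  Finset.prod_ne_zero_iff.mpr fun j hj =>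
    qnum_ne_zero hp (Nat.succ_pos j) (by have := Finset.mem_range.mp hj; omega)

theorem qfact_succ (p k : ℕ) : qfact p (k + 1) = qfact p k * qnum p (k + 1) :=
  Finset.prod_range_succ _ _

/-- The coefficient of `x ^ m` in the cut-off q-exponential. -/
def qexpCoeff (p m : ℕ) : ℂ := q p ^ (m * (m - 1) / 2) / qfact p m

theorem qexpCoeff_zero (p : ℕ) : qexpCoeff p 0 = 1 := by simp [qexpCoeff, qfact]

theorem qexpCoeff_succ {p : ℕ} (hp : Odd p) {m : ℕ} (hm : m + 1 < p) :
    qexpCoeff p (m + 1) * (qnum p (m + 1) * (q p)⁻¹ ^ m) = qexpCoeff p m := by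
  have hexp : (m + 1) * (m + 1 - 1) / 2 = m * (m - 1) / 2 + m := by
    have h1 := Finset.sum_range_id_mul_two m
    have h2 := Finset.sum_range_id_mul_two (m + 1)
    rw [Finset.sum_range_succ] at h2
    omega
  have h1 := qnum_ne_zero hp (Nat.succ_pos m) hm
  have h2 := qfact_ne_zero hp (by omega : m < p)
  have hq := q_ne_zero p
  rw [qexpCoeff, qexpCoeff, hexp, qfact_succ, pow_add, inv_pow]
  field_simp

theorem qexpCoeff_top {p : ℕ} (hp : Odd p) :
    qexpCoeff p (p - 1) = q p / qfact p (p - 1) := by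
  obtain ⟨k, rfl⟩ := hp
  have hone : q (2 * k + 1) ^ (2 * k + 1) = 1 :=
    (q_isPrimitiveRoot (Nat.succ_ne_zero (2 * k))).pow_eq_one
  rcases Nat.eq_zero_or_pos k with rfl | hk
  · simp only [mul_zero, zero_add, pow_one] at hone
    simp [qexpCoeff, hone]
  obtain ⟨j, rfl⟩ : ∃ j, k = j + 1 := ⟨k - 1, by omega⟩
  have hexp : (2 * (j + 1) + 1 - 1) * (2 * (j + 1) + 1 - 1 - 1) / 2 =
      (2 * (j + 1) + 1) * j + 1 := by
    rw [show 2 * (j + 1) + 1 - 1 = 2 * (j + 1) by omega,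
      show 2 * (j + 1) - 1 = 2 * j + 1 by omega, mul_assoc, Nat.mul_div_cancel_left _ two_pos]
    ring
  rw [qexpCoeff, hexp, pow_succ, pow_mul, hone, one_pow, one_mul]

theorem inv_q_pow_pred {p : ℕ} (hp : p ≠ 0) : (q p)⁻¹ ^ (p - 1) = q p := by
  rw [inv_pow, inv_eq_iff_eq_inv]
  refine eq_inv_of_mul_eq_one_left ?_
  rw [pow_sub_one_mul hp, (q_isPrimitiveRoot hp).pow_eq_one]

theorem neg_I_pow_pred {p : ℕ} (hp : Odd p) :
    (-Complex.I) ^ (p - 1) = -(-1 : ℂ) ^ ((p + 1) / 2) := by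
  obtain ⟨k, rfl⟩ := hp
  rw [show (2 * k + 1 + 1) / 2 = k + 1 by omega, Nat.add_sub_cancel, pow_mul]
  simp [pow_succ]

section TwistedDerivation

variable {B : Type*} [Ring B] [Algebra ℂ B]

/-- The cut-off q-exponential `e₊(a E)` in an arbitrary algebra. -/
def qexpSmul (p : ℕ) (a : ℂ) (E : B) : B :=
  ∑ m ∈ Finset.range p, (qexpCoeff p m * a ^ m) • E ^ m

/-- An operator lowering the powers of `E` with q-number weights, and sending the lowest vector
to the appropriate multiple of the top one, has `e₊(a E) X` as an eigenvector. -/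
theorem qexpSmul_mul_eigenvector {p : ℕ} (hp : Odd p) (T : B →ₗ[ℂ] B) (E X : B)
    {a α χ : ℂ} (hα : α * a = χ)
    (hzero : T X = (χ * (qexpCoeff p (p - 1) * a ^ (p - 1))) • (E ^ (p - 1) * X))
    (hsucc : ∀ n, T (E ^ (n + 1) * X) = (α * (qnum p (n + 1) * (q p)⁻¹ ^ n)) • (E ^ n * X)) :
    T (qexpSmul p a E * X) = χ • (qexpSmul p a E * X) := by
  obtain ⟨k, rfl⟩ : ∃ k, p = k + 1 := ⟨p - 1, by have := hp.pos; omega⟩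
  rw [Nat.add_sub_cancel] at hzero
  simp only [qexpSmul, Finset.sum_mul, smul_mul_assoc, map_sum, map_smul, Finset.smul_sum]
  rw [Finset.sum_range_succ', Finset.sum_range_succ]
  congr 1
  · refine Finset.sum_congr rfl fun m hm => ?_
    rw [hsucc, smul_smul, smul_smul,
      ← qexpCoeff_succ hp (by have := Finset.mem_range.mp hm; omega : m + 1 < k + 1), ← hα]
    congr 1
    ring
  · simp [hzero, qexpCoeff_zero, smul_smul]

variable {RK : B ≃ₐ[ℂ] B} {R : B →ₗ[ℂ] B}

theorem twisted_map_one (hR : ∀ X Y, R (X * Y) = R X * RK Y + RK.symm X * R Y) : R 1 = 0 := by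
  simpa using hR 1 1

theorem twisted_map_pow_eq_zero (hR : ∀ X Y, R (X * Y) = R X * RK Y + RK.symm X * R Y)
    {F : B} (hF : R F = 0) (n : ℕ) : R (F ^ n) = 0 := by
  induction n with
  | zero => simpa using twisted_map_one hR
  | succ n ih => rw [pow_succ, hR, ih, hF, zero_mul, mul_zero, add_zero]

theorem twisted_map_qexpSmul_eq_zero
    (hR : ∀ X Y, R (X * Y) = R X * RK Y + RK.symm X * R Y)
    {F : B} (hF : R F = 0) (p : ℕ) (a : ℂ) : R (qexpSmul p a F) = 0 := by
  simp [qexpSmul, twisted_map_pow_eq_zero hR hF]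

theorem symm_apply_of_apply_eq_smul {E : B} {r : ℂ} (hr : r ≠ 0) (hE : RK E = r • E) :
    RK.symm E = r⁻¹ • E := by
  rw [AlgEquiv.symm_apply_eq, map_smul, hE, inv_smul_smul₀ hr]

theorem twisted_map_pow {p : ℕ} (hp : Odd p) (hp3 : 3 ≤ p)
    (hR : ∀ X Y, R (X * Y) = R X * RK Y + RK.symm X * R Y)
    {E : B} (hE : RK E = q p • E) {c : ℂ} (hRE : R E = c • 1) (n : ℕ) :
    R (E ^ (n + 1)) = (c * qnum p (n + 1)) • E ^ n := by
  induction n with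
  | zero => simp [hRE, qnum_succ hp hp3, qnum_zero]
  | succ n ih =>
    rw [pow_succ' E (n + 1), hR, ih, hRE, map_pow, hE,
      symm_apply_of_apply_eq_smul (q_ne_zero p) hE, qnum_succ hp hp3 (n + 1), smul_pow]
    simp only [smul_mul_assoc, mul_smul_comm, one_mul, smul_smul, ← pow_succ', ← add_smul]
    congr 1
    ring

theorem twisted_map_pow' {p : ℕ} (hp : Odd p) (hp3 : 3 ≤ p)
    (hR : ∀ X Y, R (X * Y) = R X * RK Y + RK.symm X * R Y)
    {F : B} (hF : RK F = (q p)⁻¹ • F) {c : ℂ} (hRF : R F = c • 1) (n : ℕ) :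
    R (F ^ (n + 1)) = (c * qnum p (n + 1)) • F ^ n := by
  induction n with
  | zero => simp [hRF, qnum_succ hp hp3, qnum_zero]
  | succ n ih =>
    rw [pow_succ' F (n + 1), hR, ih, hRF, map_pow, hF,
      symm_apply_of_apply_eq_smul (inv_ne_zero (q_ne_zero p)) hF, qnum_succ' hp hp3 (n + 1),
      smul_pow, inv_inv]
    simp only [smul_mul_assoc, mul_smul_comm, one_mul, smul_smul, ← pow_succ', ← add_smul]
    congr 1
    ring

theorem mul_pow_of_mul_eq_smul {E F : B} {r : ℂ} (h : F * E = r • (E * F)) (n : ℕ) :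
    F * E ^ n = r ^ n • (E ^ n * F) := by
  induction n with
  | zero => simp
  | succ n ih =>
    rw [pow_succ, ← mul_assoc, ih, smul_mul_assoc, mul_assoc, h, mul_smul_comm, smul_smul,
      ← mul_assoc, ← pow_succ]

theorem symm_symm_qexpSmul_mul_pow {p : ℕ} (hp : p ≠ 0) {E F : B}
    (hF : RK F = (q p)⁻¹ • F) (hFE : F * E = (q p ^ 2) • (E * F)) (b : ℂ) :
    RK.symm (RK.symm (qexpSmul p b F)) * E ^ (p - 1) = E ^ (p - 1) * qexpSmul p b F := by
  have hF2 : RK.symm (RK.symm F) = (q p ^ 2) • F := by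
    rw [symm_apply_of_apply_eq_smul (inv_ne_zero (q_ne_zero p)) hF, map_smul,
      symm_apply_of_apply_eq_smul (inv_ne_zero (q_ne_zero p)) hF, smul_smul, inv_inv, sq]
  have hsemi : SemiconjBy (E ^ (p - 1)) F ((q p ^ 2) • F) := by
    rw [SemiconjBy, smul_mul_assoc, mul_pow_of_mul_eq_smul hFE, smul_smul, ← pow_succ',
      Nat.sub_add_cancel (Nat.pos_of_ne_zero hp), ← pow_mul, mul_comm 2 p, pow_mul,
      (q_isPrimitiveRoot hp).pow_eq_one, one_pow, one_smul]
  simp only [qexpSmul, map_sum, map_smul, map_pow, hF2, Finset.sum_mul, Finset.mul_sum,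
    smul_mul_assoc, mul_smul_comm]
  exact Finset.sum_congr rfl fun m _ => by rw [(hsemi.pow_right m).eq]

theorem plane_wave_eigenvector_plus {p : ℕ} (hp : Odd p) (hp3 : 3 ≤ p)
    (hR : ∀ X Y, R (X * Y) = R X * RK Y + RK.symm X * R Y) {E F h : B}
    (hE : RK E = q p • E) (hF : RK F = (q p)⁻¹ • F) (hh : RK h = h)
    (hFE : F * E = (q p ^ 2) • (E * F)) (hEp : E ^ p = 0)
    (hRE : R E = (Complex.I * qh p) • (1 : B)) (hRF : R F = 0) (χ b : ℂ)
    (hRh : R h = (Complex.I * qh p * ((-1 : ℂ) ^ ((p + 1) / 2) / qfact p (p - 1))) •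
      (E ^ (p - 1) * (Complex.I * χ ^ p) • h)) :
    (qh p)⁻¹ • RK.symm (R (qexpSmul p (-Complex.I * χ) E * (qexpSmul p b F * h))) =
      χ • (qexpSmul p (-Complex.I * χ) E * (qexpSmul p b F * h)) := by
  have hp0 : p ≠ 0 := by omega
  have hq := q_ne_zero p
  have hqh := qh_ne_zero p
  have hEs := symm_apply_of_apply_eq_smul hq hE
  have hhs : RK.symm h = h := by rw [AlgEquiv.symm_apply_eq, hh]
  have hzero : (qh p)⁻¹ • RK.symm (R (qexpSmul p b F * h)) =
      (χ * (qexpCoeff p (p - 1) * (-Complex.I * χ) ^ (p - 1))) •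
        (E ^ (p - 1) * (qexpSmul p b F * h)) := by
    rw [hR, twisted_map_qexpSmul_eq_zero hR hRF, zero_mul, zero_add, hRh]
    simp only [map_mul, map_smul, map_pow, hhs, hEs, smul_pow, mul_smul_comm, smul_mul_assoc,
      smul_smul]
    rw [← mul_assoc (RK.symm _), symm_symm_qexpSmul_mul_pow hp0 hF hFE, mul_assoc (E ^ (p - 1)),
      inv_q_pow_pred hp0,
      mul_pow, neg_I_pow_pred hp, qexpCoeff_top hp]
    congr 1
    have hinv := inv_mul_cancel₀ hqh
    rw [← mul_pow_sub_one hp0 χ]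
    generalize χ ^ (p - 1) = w, (-1 : ℂ) ^ ((p + 1) / 2) = s, (qh p)⁻¹ = u at *
    linear_combination (Complex.I ^ 2 * (s * χ * w * q p / qfact p (p - 1))) * hinv +
      (s * χ * w * q p / qfact p (p - 1)) * Complex.I_sq
  refine qexpSmul_mul_eigenvector hp ((qh p)⁻¹ • (RK.symm.toLinearMap ∘ₗ R)) E _
    (α := Complex.I) (by linear_combination (-χ) * Complex.I_sq) hzero fun n => ?_
  have htop : E ^ (n + 1) * E ^ (p - 1) = 0 := by
    rw [← pow_add, show n + 1 + (p - 1) = p + n by omega, pow_add, hEp, zero_mul]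
  have hlast : (qh p)⁻¹ • RK.symm (RK.symm (E ^ (n + 1)) * R (qexpSmul p b F * h)) = 0 := by
    rw [map_mul, ← mul_smul_comm, hzero]
    simp only [map_pow, hEs, map_smul, smul_pow, mul_smul_comm, smul_mul_assoc]
    rw [← mul_assoc (E ^ (n + 1)), htop]
    simp
  simp only [LinearMap.smul_apply, LinearMap.comp_apply, AlgEquiv.toLinearMap_apply]
  rw [hR, map_add, smul_add, hlast, add_zero, twisted_map_pow hp hp3 hR hE hRE, map_mul,
    RK.symm_apply_apply, map_smul, map_pow, hEs, smul_pow]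
  simp only [smul_mul_assoc, smul_smul]
  congr 1
  field_simp

theorem plane_wave_eigenvector_minus {p : ℕ} (hp : Odd p) (hp3 : 3 ≤ p)
    (hR : ∀ X Y, R (X * Y) = R X * RK Y + RK.symm X * R Y) {E F h : B}
    (hF : RK F = (q p)⁻¹ • F) (hh : RK h = h) (hFp : F ^ p = 0)
    (hRF : R F = (Complex.I * (qh p)⁻¹) • (1 : B)) (hRE : R E = 0) (a χ : ℂ)
    (hRh : R h = (Complex.I * (qh p)⁻¹ * ((-1 : ℂ) ^ ((p + 1) / 2) / qfact p (p - 1))) •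
      (F ^ (p - 1) * (Complex.I * χ ^ p) • h)) :
    (qh p)⁻¹ • RK (R (qexpSmul p a E * (qexpSmul p (-Complex.I * q p * χ) F * h))) =
      χ • (qexpSmul p a E * (qexpSmul p (-Complex.I * q p * χ) F * h)) := by
  have hp0 : p ≠ 0 := by omega
  have hq := q_ne_zero p
  have hqh := qh_ne_zero p
  have hqq := qh_mul_qh p
  have hzero : (qh p)⁻¹ • RK (R h) =
      (χ * (qexpCoeff p (p - 1) * (-Complex.I * q p * χ) ^ (p - 1))) • (F ^ (p - 1) * h) := by
    rw [hRh]
    simp only [map_mul, map_smul, map_pow, hh, hF, smul_pow, mul_smul_comm, smul_mul_assoc,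
      smul_smul]
    have hqp : q p ^ (p - 1) = (q p)⁻¹ := by
      rw [← inv_inj, ← inv_pow, inv_q_pow_pred hp0, inv_inv]
    have huu : (qh p)⁻¹ * (qh p)⁻¹ * q p = 1 := by rw [← hqq]; field_simp
    have hinv := mul_inv_cancel₀ hq
    rw [inv_q_pow_pred hp0, mul_pow, mul_pow, neg_I_pow_pred hp, qexpCoeff_top hp, hqp,
      ← mul_pow_sub_one hp0 χ]
    congr 1
    generalize χ ^ (p - 1) = w, (-1 : ℂ) ^ ((p + 1) / 2) = s, (qh p)⁻¹ = u, (q p)⁻¹ = v at *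
    linear_combination (Complex.I ^ 2 * (s * χ * w / qfact p (p - 1))) * huu +
      (s * χ * w / qfact p (p - 1)) * Complex.I_sq + (s * χ * w / qfact p (p - 1)) * hinv
  have key : (qh p)⁻¹ • RK (R (qexpSmul p (-Complex.I * q p * χ) F * h)) =
      χ • (qexpSmul p (-Complex.I * q p * χ) F * h) := by
    refine qexpSmul_mul_eigenvector hp ((qh p)⁻¹ • (RK.toLinearMap ∘ₗ R)) F h
      (α := Complex.I * (q p)⁻¹) (by field_simp; linear_combination (-χ) * Complex.I_sq)
      hzero fun n => ?_
    have htop : F ^ (n + 1) * F ^ (p - 1) = 0 := by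
      rw [← pow_add, show n + 1 + (p - 1) = p + n by omega, pow_add, hFp, zero_mul]
    have hlast : (qh p)⁻¹ • RK (RK.symm (F ^ (n + 1)) * R h) = 0 := by
      rw [map_mul, RK.apply_symm_apply, ← mul_smul_comm, hzero, mul_smul_comm,
        ← mul_assoc (F ^ (n + 1)), htop, zero_mul, smul_zero]
    simp only [LinearMap.smul_apply, LinearMap.comp_apply, AlgEquiv.toLinearMap_apply]
    rw [hR, map_add, smul_add, hlast, add_zero, twisted_map_pow' hp hp3 hR hF hRF, map_mul,
      hh, hh, map_smul, map_pow, hF, smul_pow]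
    simp only [smul_mul_assoc, smul_smul]
    congr 1
    rw [← hqq]
    field_simp
  rw [hR, twisted_map_qexpSmul_eq_zero hR hRE, zero_mul, zero_add, map_mul,
    RK.apply_symm_apply, ← mul_smul_comm, key, mul_smul_comm]

end TwistedDerivation

theorem ηm_mul_ηp (p : ℕ) : ηm p * ηp p = (q p ^ 2) • (ηp p * ηm p) := by
  have h := RingQuot.mkAlgHom_rel ℂ (ERel.commEta (p := p))
  simp only [map_mul, map_smul] at h
  exact h

theorem ηp_pow (p : ℕ) : ηp p ^ p = 0 := by
  have h := RingQuot.mkAlgHom_rel ℂ (ERel.epPow (p := p))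
  simp only [map_pow, map_zero] at h
  exact h

theorem ηm_pow (p : ℕ) : ηm p ^ p = 0 := by
  have h := RingQuot.mkAlgHom_rel ℂ (ERel.emPow (p := p))
  simp only [map_pow, map_zero] at h
  exact h

theorem hasFDerivAt_expAB (a b : ℂ) (z : ℝ × ℝ) :
    HasFDerivAt (expAB a b : ℝ × ℝ → ℂ)
      (Complex.exp (Complex.I * (a * z.1 + b * z.2)) • (Complex.I •
        (a • (Complex.ofRealCLM ∘L ContinuousLinearMap.fst ℝ ℝ ℝ) +
          b • (Complex.ofRealCLM ∘L ContinuousLinearMap.snd ℝ ℝ ℝ)))) z := by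
  have h1 : HasFDerivAt (fun w : ℝ × ℝ => (w.1 : ℂ))
      (Complex.ofRealCLM ∘L ContinuousLinearMap.fst ℝ ℝ ℝ) z :=
    (Complex.ofRealCLM ∘L ContinuousLinearMap.fst ℝ ℝ ℝ).hasFDerivAt
  have h2 : HasFDerivAt (fun w : ℝ × ℝ => (w.2 : ℂ))
      (Complex.ofRealCLM ∘L ContinuousLinearMap.snd ℝ ℝ ℝ) z :=
    (Complex.ofRealCLM ∘L ContinuousLinearMap.snd ℝ ℝ ℝ).hasFDerivAt
  exact (((h1.const_mul a).add (h2.const_mul b)).const_mul Complex.I).cexp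

theorem dPlus_expAB (a b : ℂ) : dPlus (expAB a b) = (Complex.I * a) • expAB a b := by
  ext z
  change fderiv ℝ (expAB a b : ℝ × ℝ → ℂ) z (1, 0) =
    (Complex.I * a) * Complex.exp (Complex.I * (a * z.1 + b * z.2))
  rw [(hasFDerivAt_expAB a b z).fderiv]
  simp
  ring

theorem dMinus_expAB (a b : ℂ) : dMinus (expAB a b) = (Complex.I * b) • expAB a b := by
  ext z
  change fderiv ℝ (expAB a b : ℝ × ℝ → ℂ) z (0, 1) =
    (Complex.I * b) * Complex.exp (Complex.I * (a * z.1 + b * z.2))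
  rw [(hasFDerivAt_expAB a b z).fderiv]
  simp
  ring

theorem pow_tmul_one (p : ℕ) (x : A p) (n : ℕ) :
    (x ⊗ₜ[ℂ] (1 : ↥Cinf)) ^ n = (x ^ n) ⊗ₜ[ℂ] (1 : ↥Cinf) := by
  rw [Algebra.TensorProduct.tmul_pow, one_pow]

theorem qexp_smul_tmul_one (p : ℕ) (a : ℂ) (x : A p) :
    qexp p (a • x) ⊗ₜ[ℂ] (1 : ↥Cinf) = qexpSmul p a (x ⊗ₜ[ℂ] (1 : ↥Cinf)) := by
  simp only [qexp, qexpSmul, qexpCoeff, TensorProduct.sum_tmul, pow_tmul_one, smul_pow,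
    smul_smul, TensorProduct.smul_tmul']

theorem qexp_mul_qexp_tmul (p : ℕ) (a b : ℂ) (x y : A p) (f : ↥Cinf) :
    (qexp p (a • x) * qexp p (b • y)) ⊗ₜ[ℂ] f =
      qexpSmul p a (x ⊗ₜ[ℂ] (1 : ↥Cinf)) *
        (qexpSmul p b (y ⊗ₜ[ℂ] (1 : ↥Cinf)) * (1 : A p) ⊗ₜ[ℂ] f) := by
  simp only [← qexp_smul_tmul_one, Algebra.TensorProduct.tmul_mul_tmul, one_mul, mul_one]

/-- The plane waves `Y = (e₊(−iχ₊η₊)e₊(−iqχ₋η₋))⊗h_χ` are eigenfunctions of the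
operators representing `p₊' = q^{−1/2}p₊κ⁻¹` and `p₋' = q^{−1/2}p₋κ` in the right
regular representation. -/
theorem statement14 (p : ℕ) (hp : Odd p) (hp3 : 3 ≤ p)
    (RK : AC p ≃ₐ[ℂ] AC p)
    (hK1 : RK (ηp p ⊗ₜ[ℂ] (1 : ↥Cinf)) = q p • (ηp p ⊗ₜ[ℂ] (1 : ↥Cinf)))
    (hK2 : RK (ηm p ⊗ₜ[ℂ] (1 : ↥Cinf)) = (q p)⁻¹ • (ηm p ⊗ₜ[ℂ] (1 : ↥Cinf)))
    (hK3 : RK (dl p ⊗ₜ[ℂ] (1 : ↥Cinf)) = q p • (dl p ⊗ₜ[ℂ] (1 : ↥Cinf)))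
    (hK4 : ∀ f : ↥Cinf, RK ((1 : A p) ⊗ₜ[ℂ] f) = (1 : A p) ⊗ₜ[ℂ] f)
    (Rp Rm : AC p →ₗ[ℂ] AC p)
    (hp1 : Rp (ηp p ⊗ₜ[ℂ] (1 : ↥Cinf)) = (Complex.I * qh p) • (1 : AC p))
    (hp2 : Rp (ηm p ⊗ₜ[ℂ] (1 : ↥Cinf)) = 0)
    (hp3' : Rp (dl p ⊗ₜ[ℂ] (1 : ↥Cinf)) = 0)
    (hp4 : ∀ f : ↥Cinf, Rp ((1 : A p) ⊗ₜ[ℂ] f) =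
      (Complex.I * qh p * ((-1 : ℂ) ^ ((p + 1) / 2) / qfact p (p - 1))) •
        ((ηp p ^ (p - 1)) ⊗ₜ[ℂ] dPlus f))
    (hp5 : ∀ X Y : AC p, Rp (X * Y) = Rp X * RK Y + RK.symm X * Rp Y)
    (hm1 : Rm (ηm p ⊗ₜ[ℂ] (1 : ↥Cinf)) = (Complex.I * (qh p)⁻¹) • (1 : AC p))
    (hm2 : Rm (ηp p ⊗ₜ[ℂ] (1 : ↥Cinf)) = 0)
    (hm3 : Rm (dl p ⊗ₜ[ℂ] (1 : ↥Cinf)) = 0)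
    (hm4 : ∀ f : ↥Cinf, Rm ((1 : A p) ⊗ₜ[ℂ] f) =
      (Complex.I * (qh p)⁻¹ * ((-1 : ℂ) ^ ((p + 1) / 2) / qfact p (p - 1))) •
        ((ηm p ^ (p - 1)) ⊗ₜ[ℂ] dMinus f))
    (hm5 : ∀ X Y : AC p, Rm (X * Y) = Rm X * RK Y + RK.symm X * Rm Y)
    (cp cm : ℂ) :
    (qh p)⁻¹ • RK.symm (Rp
        ((qexp p ((-Complex.I * cp) • ηp p) * qexp p ((-Complex.I * q p * cm) • ηm p))
          ⊗ₜ[ℂ] expAB (cp ^ p) (cm ^ p))) =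
      cp • ((qexp p ((-Complex.I * cp) • ηp p) * qexp p ((-Complex.I * q p * cm) • ηm p))
          ⊗ₜ[ℂ] expAB (cp ^ p) (cm ^ p)) ∧
    (qh p)⁻¹ • RK (Rm
        ((qexp p ((-Complex.I * cp) • ηp p) * qexp p ((-Complex.I * q p * cm) • ηm p))
          ⊗ₜ[ℂ] expAB (cp ^ p) (cm ^ p))) =
      cm • ((qexp p ((-Complex.I * cp) • ηp p) * qexp p ((-Complex.I * q p * cm) • ηm p))
          ⊗ₜ[ℂ] expAB (cp ^ p) (cm ^ p)) := by
  rw [qexp_mul_qexp_tmul]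
  constructor
  · refine plane_wave_eigenvector_plus (B := AC p) hp hp3 hp5 hK1 hK2 (hK4 _) ?_ ?_ hp1 hp2 cp _ ?_
    · rw [Algebra.TensorProduct.tmul_mul_tmul, Algebra.TensorProduct.tmul_mul_tmul, ηm_mul_ηp,
        TensorProduct.smul_tmul']
    · rw [pow_tmul_one, ηp_pow, TensorProduct.zero_tmul]
    · rw [hp4, dPlus_expAB, pow_tmul_one, mul_smul_comm,
        Algebra.TensorProduct.tmul_mul_tmul, mul_one, one_mul, TensorProduct.tmul_smul]
  · refine plane_wave_eigenvector_minus (B := AC p) hp hp3 hm5 hK2 (hK4 _) ?_ hm1 hm2 _ cm ?_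
    · rw [pow_tmul_one, ηm_pow, TensorProduct.zero_tmul]
    · rw [hm4, dMinus_expAB, pow_tmul_one, mul_smul_comm,
        Algebra.TensorProduct.tmul_mul_tmul, mul_one, one_mul, TensorProduct.tmul_smul]
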